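/- Let (V, ω) be a symplectic vector space over ℝ and L₁, L₂, L₃, L₄ four Lagrangian subspaces. Then the Wall signatures satisfy the cocycle identity σ(V; L₁, L₂, L₃) + σ(V; L₁, L₃, L₄) = σ(V; L₁, L₂, L₄) + σ(V; L₂, L₃, L₄). -/

import Mathlib

/-- A subspace `L` of a symplectic vector space `(V, ω)` is Lagrangian if it equals
its own `ω`-orthogonal complement. -/
def IsLagrangian {V : Type*} [AddCommGroup V] [Module ℝ V]
    (ω : LinearMap.BilinForm ℝ V) (L : Submodule ℝ V) : Prop :=
  ω.orthogonal L = L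

/-- The Wall pairing `Ψ(x, y) = ω(x, y₂)`, where `y + y₂ + y₃ = 0` with `y₂ ∈ L₂`,
`y₃ ∈ L₃` is some choice of decomposition (the value is independent of the choice
when the `Lᵢ` are Lagrangian and `x ∈ L₂ + L₃`). -/
noncomputable def wallPsi {V : Type*} [AddCommGroup V] [Module ℝ V]
    (ω : LinearMap.BilinForm ℝ V) (L₂ L₃ : Submodule ℝ V) (x y : V) : ℝ := by
  classical
  exact if h : ∃ q : V × V, q.1 ∈ L₂ ∧ q.2 ∈ L₃ ∧ y + q.1 + q.2 = 0 then ω x h.choose.1 else 0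

/-- The maximal dimension of a subspace of `L₁ ⊓ (L₂ ⊔ L₃)` on which the Wall form is
positive definite. -/
noncomputable def wallPosIndex {V : Type*} [AddCommGroup V] [Module ℝ V]
    (ω : LinearMap.BilinForm ℝ V) (L₁ L₂ L₃ : Submodule ℝ V) : ℕ :=
  sSup {n : ℕ | ∃ W : Submodule ℝ V, W ≤ L₁ ⊓ (L₂ ⊔ L₃) ∧ Module.finrank ℝ W = n ∧
    ∀ x ∈ W, x ≠ 0 → 0 < wallPsi ω L₂ L₃ x x}

/-- The maximal dimension of a subspace of `L₁ ⊓ (L₂ ⊔ L₃)` on which the Wall form is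
negative definite. -/
noncomputable def wallNegIndex {V : Type*} [AddCommGroup V] [Module ℝ V]
    (ω : LinearMap.BilinForm ℝ V) (L₁ L₂ L₃ : Submodule ℝ V) : ℕ :=
  sSup {n : ℕ | ∃ W : Submodule ℝ V, W ≤ L₁ ⊓ (L₂ ⊔ L₃) ∧ Module.finrank ℝ W = n ∧
    ∀ x ∈ W, x ≠ 0 → wallPsi ω L₂ L₃ x x < 0}

/-- `σ(V; L₁, L₂, L₃)`: the signature of the Wall form `Ψ` on `L₁ ⊓ (L₂ + L₃)`
(number of positive minus number of negative eigenvalues). -/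
noncomputable def wallSignature {V : Type*} [AddCommGroup V] [Module ℝ V]
    (ω : LinearMap.BilinForm ℝ V) (L₁ L₂ L₃ : Submodule ℝ V) : ℤ :=
  (wallPosIndex ω L₁ L₂ L₃ : ℤ) - (wallNegIndex ω L₁ L₂ L₃ : ℤ)

/-!
The Wall form is the symplectic area of triangles: `Ψ(x, x) = ω(x, y)` is the area form on closed
paths `x + y + z = 0` with sides in `L₁, L₂, L₃`, and the Wall signature is the signature of this
form on the space of all such triangles. Consider likewise the area form on closed quadrilaterals
with sides in `L₁, L₂, L₃, L₄`. The degenerate quadrilaterals `(a, 0, -a, 0)` with `a ∈ L₁ ⊓ L₃`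
form an isotropic subspace, and passing to its orthogonal complement preserves the signature. As
`(L₁ ⊓ L₃)^⊥ = L₁ + L₃`, this complement consists of the quadrilaterals that can be cut into a
triangle with sides in `L₁, L₂, L₃` and one with sides in `L₁, L₃, L₄`. So the signature of
quadrilaterals is the left-hand side of the cocycle identity; since area does not depend on the
vertex where a path starts, cutting with `L₂, L₄` instead computes it as the right-hand side.
-/

section Signature

open Module

variable {𝕜 E E' : Type*} [Field 𝕜] [LinearOrder 𝕜]
  [AddCommGroup E] [Module 𝕜 E] [AddCommGroup E'] [Module 𝕜 E']

/-- The signature of a quadratic form: the difference of its positive and negative indices. As for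
`sigPos`, the form may be degenerate. -/
noncomputable def formSignature (Q : QuadraticForm 𝕜 E) : ℤ :=
  sigPos Q - sigNeg Q

theorem finrank_le_sigPos_of_posDef_comp [FiniteDimensional 𝕜 E] (Q : QuadraticForm 𝕜 E)
    (f : E' →ₗ[𝕜] E) (hf : (Q.comp f).PosDef) : finrank 𝕜 E' ≤ sigPos Q := by
  have f_ne_zero : ∀ x, x ≠ 0 → f x ≠ 0 := fun x hx hfx ↦
    (hf x hx).ne' (by rw [QuadraticMap.comp_apply, hfx, map_zero])
  have f_injective : Function.Injective f :=
    (injective_iff_map_eq_zero f).2 fun x ↦ not_imp_not.1 (f_ne_zero x)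
  rw [← LinearMap.finrank_range_of_inj f_injective]
  apply le_sigPos_of_posDef
  rintro ⟨_, x, rfl⟩ hx
  exact hf x fun h ↦ hx (by simp [h])

theorem sigPos_comp_le [FiniteDimensional 𝕜 E] [FiniteDimensional 𝕜 E'] (Q : QuadraticForm 𝕜 E)
    (f : E' →ₗ[𝕜] E) : sigPos (Q.comp f) ≤ sigPos Q := by
  obtain ⟨W, hW, hpos⟩ := exists_finrank_eq_sigPos_and_posDef (Q.comp f)
  rw [← hW]
  exact finrank_le_sigPos_of_posDef_comp Q (f ∘ₗ W.subtype) hpos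

theorem sigPos_comp_of_surjective [FiniteDimensional 𝕜 E] [FiniteDimensional 𝕜 E']
    (Q : QuadraticForm 𝕜 E) {f : E' →ₗ[𝕜] E} (hf : Function.Surjective f) :
    sigPos (Q.comp f) = sigPos Q := by
  obtain ⟨g, hg⟩ := f.exists_rightInverse_of_surjective (LinearMap.range_eq_top.2 hf)
  have comp_section : (Q.comp f).comp g = Q :=
    QuadraticMap.ext fun x ↦ congrArg Q (LinearMap.congr_fun hg x)
  refine (sigPos_comp_le Q f).antisymm ?_
  simpa only [comp_section] using sigPos_comp_le (Q.comp f) g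

theorem formSignature_comp_of_surjective [FiniteDimensional 𝕜 E] [FiniteDimensional 𝕜 E']
    (Q : QuadraticForm 𝕜 E) {f : E' →ₗ[𝕜] E} (hf : Function.Surjective f) :
    formSignature (Q.comp f) = formSignature Q := by
  have sigNeg_comp : sigNeg (Q.comp f) = sigNeg Q := sigPos_comp_of_surjective (-Q) hf
  rw [formSignature, formSignature, sigPos_comp_of_surjective Q hf, sigNeg_comp]

theorem sigPos_add_sigPos_le_sigPos_prod [IsOrderedAddMonoid 𝕜]
    [FiniteDimensional 𝕜 E] [FiniteDimensional 𝕜 E']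
    (Q : QuadraticForm 𝕜 E) (Q' : QuadraticForm 𝕜 E') :
    sigPos Q + sigPos Q' ≤ sigPos (Q.prod Q') := by
  obtain ⟨W, hW, hpos⟩ := exists_finrank_eq_sigPos_and_posDef Q
  obtain ⟨W', hW', hpos'⟩ := exists_finrank_eq_sigPos_and_posDef Q'
  rw [← hW, ← hW', ← finrank_prod]
  exact finrank_le_sigPos_of_posDef_comp _ (W.subtype.prodMap W'.subtype) (hpos.prod hpos')

theorem finrank_submodule_prod {K V V' : Type*} [Field K] [AddCommGroup V] [Module K V]
    [AddCommGroup V'] [Module K V'] [FiniteDimensional K V] [FiniteDimensional K V']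
    (p : Submodule K V) (p' : Submodule K V') :
    finrank K (p.prod p') = finrank K p + finrank K p' := by
  have range_prodMap := LinearMap.range_prodMap p.subtype p'.subtype
  rw [p.range_subtype, p'.range_subtype] at range_prodMap
  rw [← finrank_prod, ← range_prodMap]
  exact LinearMap.finrank_range_of_inj (p.subtype_injective.prodMap p'.subtype_injective)

theorem radical_prod_radical_le {R M M' : Type*} [CommRing R] [AddCommGroup M] [Module R M]
    [AddCommGroup M'] [Module R M'] (Q : QuadraticForm R M) (Q' : QuadraticForm R M') :
    Q.radical.prod Q'.radical ≤ (Q.prod Q').radical := by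
  rintro ⟨x, y⟩ ⟨hx, hy⟩
  rw [SetLike.mem_coe, QuadraticMap.mem_radical_iff'] at hx hy
  rw [QuadraticMap.mem_radical_iff']
  simp [hx.1, hx.2, hy.1, hy.2]

theorem formSignature_prod [IsStrictOrderedRing 𝕜]
    [FiniteDimensional 𝕜 E] [FiniteDimensional 𝕜 E']
    (Q : QuadraticForm 𝕜 E) (Q' : QuadraticForm 𝕜 E') :
    formSignature (Q.prod Q') = formSignature Q + formSignature Q' := by
  have pos_le := sigPos_add_sigPos_le_sigPos_prod Q Q'
  have neg_le : sigNeg Q + sigNeg Q' ≤ sigNeg (Q.prod Q') := by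
    have prod_neg : (-Q).prod (-Q') = -Q.prod Q' :=
      QuadraticMap.ext fun x ↦ (neg_add (Q x.1) (Q' x.2)).symm
    simpa only [prod_neg, sigPos_neg] using sigPos_add_sigPos_le_sigPos_prod (-Q) (-Q')
  have radical_ge :
      finrank 𝕜 Q.radical + finrank 𝕜 Q'.radical ≤ finrank 𝕜 (Q.prod Q').radical := by
    rw [← finrank_submodule_prod]
    exact Submodule.finrank_mono (radical_prod_radical_le Q Q')
  have inertia := QuadraticForm.sigPos_add_sigNeg_add_radical (Q := Q)
  have inertia' := QuadraticForm.sigPos_add_sigNeg_add_radical (Q := Q')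
  have inertia_prod := QuadraticForm.sigPos_add_sigNeg_add_radical (Q := Q.prod Q')
  rw [finrank_prod] at inertia_prod
  unfold formSignature
  omega

theorem sigPos_add_finrank_le_sigPos_restrict_add [FiniteDimensional 𝕜 E]
    (Q : QuadraticForm 𝕜 E) (P : Submodule 𝕜 E) :
    sigPos Q + finrank 𝕜 P ≤ sigPos (Q.restrict P) + finrank 𝕜 E := by
  obtain ⟨W, hW, hpos⟩ := exists_finrank_eq_sigPos_and_posDef Q
  have inf_le : finrank 𝕜 ↥(W ⊓ P) ≤ sigPos (Q.restrict P) := by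
    apply finrank_le_sigPos_of_posDef_comp _ (Submodule.inclusion inf_le_right)
    rintro ⟨x, hx⟩ hne
    exact hpos ⟨x, hx.1⟩ (by simpa using hne)
  have dim_formula := Submodule.finrank_sup_add_finrank_inf_eq W P
  have sup_le := (W ⊔ P).finrank_le
  omega

theorem sup_radical_le_map_radical_restrict_orthogonal {R M : Type*} [CommRing R]
    [AddCommGroup M] [Module R M] (Q : QuadraticForm R M) {K : Submodule R M}
    (hK : ∀ x ∈ K, Q x = 0) :
    K ⊔ Q.radical ≤ (Q.restrict (LinearMap.BilinForm.orthogonal Q.polarBilin K)).radical.map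
      (LinearMap.BilinForm.orthogonal Q.polarBilin K).subtype := by
  refine sup_le (fun k hk ↦ ?_) fun r hr ↦ ?_
  · have k_orthogonal : k ∈ LinearMap.BilinForm.orthogonal Q.polarBilin K := fun l hl ↦ by
      change Q (l + k) - Q l - Q k = 0
      rw [hK _ (K.add_mem hl hk), hK l hl, hK k hk, sub_zero, sub_zero]
    refine ⟨⟨k, k_orthogonal⟩, ?_, rfl⟩
    refine QuadraticMap.mem_radical_iff'.2 ⟨hK k hk, fun ⟨x, hx⟩ ↦ ?_⟩
    have polar_eq_zero : Q (k + x) - Q k - Q x = 0 := hx k hk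
    rw [hK k hk, sub_zero, sub_eq_zero] at polar_eq_zero
    exact polar_eq_zero
  · rw [QuadraticMap.mem_radical_iff'] at hr
    have r_orthogonal : r ∈ LinearMap.BilinForm.orthogonal Q.polarBilin K := fun l _ ↦ by
      change Q (l + r) - Q l - Q r = 0
      rw [add_comm l r, hr.2, hr.1, sub_self, sub_zero]
    exact ⟨⟨r, r_orthogonal⟩, QuadraticMap.mem_radical_iff'.2 ⟨hr.1, fun x ↦ hr.2 x⟩, rfl⟩

theorem formSignature_restrict_orthogonal [IsStrictOrderedRing 𝕜] [FiniteDimensional 𝕜 E]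
    (Q : QuadraticForm 𝕜 E) {K : Submodule 𝕜 E} (hK : ∀ x ∈ K, Q x = 0) :
    formSignature (Q.restrict (LinearMap.BilinForm.orthogonal Q.polarBilin K)) =
      formSignature Q := by
  set P := LinearMap.BilinForm.orthogonal Q.polarBilin K with hP
  have finrank_orthogonal : finrank 𝕜 K + finrank 𝕜 P =
      finrank 𝕜 E + finrank 𝕜 ↥(K ⊓ Q.radical) := by
    let : Invertible (2 : 𝕜) := invertibleOfNonzero two_ne_zero
    rw [hP, QuadraticMap.radical_eq_ker_polarBilin]
    exact LinearMap.BilinForm.finrank_add_finrank_orthogonal' K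
  have radical_ge : finrank 𝕜 ↥(K ⊔ Q.radical) ≤ finrank 𝕜 (Q.restrict P).radical := by
    rw [← Submodule.finrank_map_subtype_eq P]
    exact Submodule.finrank_mono (sup_radical_le_map_radical_restrict_orthogonal Q hK)
  have dim_formula := Submodule.finrank_sup_add_finrank_inf_eq K Q.radical
  have pos_le := sigPos_add_finrank_le_sigPos_restrict_add Q P
  have neg_le : sigNeg Q + finrank 𝕜 P ≤ sigNeg (Q.restrict P) + finrank 𝕜 E :=
    sigPos_add_finrank_le_sigPos_restrict_add (-Q) P
  have inertia := QuadraticForm.sigPos_add_sigNeg_add_radical (Q := Q)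
  have inertia_restrict := QuadraticForm.sigPos_add_sigNeg_add_radical (Q := Q.restrict P)
  unfold formSignature
  omega

theorem formSignature_comp_of_range_eq_orthogonal [IsStrictOrderedRing 𝕜]
    [FiniteDimensional 𝕜 E] [FiniteDimensional 𝕜 E'] (Q : QuadraticForm 𝕜 E)
    {K : Submodule 𝕜 E} (hK : ∀ x ∈ K, Q x = 0) (f : E' →ₗ[𝕜] E)
    (hf : LinearMap.range f = LinearMap.BilinForm.orthogonal Q.polarBilin K) :
    formSignature (Q.comp f) = formSignature Q := by
  have comp_eq : (Q.restrict (LinearMap.range f)).comp f.rangeRestrict = Q.comp f := rfl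
  rw [← comp_eq, formSignature_comp_of_surjective _ f.surjective_rangeRestrict, hf,
    formSignature_restrict_orthogonal Q hK]

theorem sSup_finrank_pos_eq_sigPos [FiniteDimensional 𝕜 E] (Q : QuadraticForm 𝕜 E)
    (f : E →ₗ[𝕜] E') (q : E' → 𝕜) (hq : ∀ x, q (f x) = Q x) :
    sSup {n : ℕ | ∃ W : Submodule 𝕜 E', W ≤ LinearMap.range f ∧ finrank 𝕜 W = n ∧
      ∀ x ∈ W, x ≠ 0 → 0 < q x} = sigPos Q := by
  apply IsGreatest.csSup_eq
  constructor
  · obtain ⟨W, hW, hpos⟩ := exists_finrank_eq_sigPos_and_posDef Q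
    have f_injective_on_W : Function.Injective (f.domRestrict W) := by
      refine (injective_iff_map_eq_zero _).2 fun w hw ↦ ?_
      by_contra hne
      refine (hpos w hne).ne' ?_
      rw [QuadraticMap.restrict_apply, ← hq, ← f.domRestrict_apply, hw, ← map_zero f, hq, map_zero]
    refine ⟨LinearMap.range (f.domRestrict W), ?_, ?_, ?_⟩
    · rintro _ ⟨w, rfl⟩
      exact ⟨w, rfl⟩
    · rw [LinearMap.finrank_range_of_inj f_injective_on_W, hW]
    · rintro _ ⟨w, rfl⟩ hne
      rw [f.domRestrict_apply, hq]
      exact hpos w fun hw ↦ hne (by rw [hw, map_zero])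
  · rintro _ ⟨W, hW, rfl, hpos⟩
    obtain ⟨g, hg⟩ := f.rangeRestrict.exists_rightInverse_of_surjective f.range_rangeRestrict
    have f_section : ∀ x, f (g x) = x := fun x ↦ congrArg Subtype.val (LinearMap.congr_fun hg x)
    apply finrank_le_sigPos_of_posDef_comp Q (g ∘ₗ Submodule.inclusion hW)
    intro x hx
    rw [QuadraticMap.comp_apply, ← hq, LinearMap.comp_apply, f_section]
    exact hpos x x.2 (by simpa using hx)

end Signature

section Polygons

variable {R V : Type*} [CommRing R] [AddCommGroup V] [Module R V]

/-- The closed triangles with sides in `L₁`, `L₂`, `L₃`. The triangle `x + y + z = 0` is recorded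
by `(x, y)`, the last side being determined by the others. -/
def closedTriangles (L₁ L₂ L₃ : Submodule R V) : Submodule R (V × V) :=
  L₁.prod L₂ ⊓ L₃.comap (LinearMap.fst R V V + LinearMap.snd R V V)

/-- The area form `ω(x, y)` on closed triangles `x + y + z = 0`. -/
def triangleForm (ω : LinearMap.BilinForm R V) (L₁ L₂ L₃ : Submodule R V) :
    QuadraticForm R (closedTriangles L₁ L₂ L₃) :=
  (LinearMap.BilinMap.toQuadraticMap
    (ω.compl₁₂ (LinearMap.fst R V V) (LinearMap.snd R V V))).restrict _

/-- The closed quadrilaterals with sides in `L₁`, `L₂`, `L₃`, `L₄`. The quadrilateral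
`x + y + z + w = 0` is recorded by `(x, y, z)`, the last side being determined by the others. -/
def closedQuadrilaterals (L₁ L₂ L₃ L₄ : Submodule R V) : Submodule R (V × V × V) :=
  L₁.prod (L₂.prod L₃) ⊓ L₄.comap (LinearMap.id.coprod (LinearMap.id.coprod LinearMap.id))

/-- The area form `ω(x, y) + ω(x + y, z)` on closed quadrilaterals `x + y + z + w = 0`, the sum of
the areas of the triangles into which a diagonal cuts it. -/
def quadrilateralForm (ω : LinearMap.BilinForm R V) (L₁ L₂ L₃ L₄ : Submodule R V) :
    QuadraticForm R (closedQuadrilaterals L₁ L₂ L₃ L₄) :=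
  (LinearMap.BilinMap.toQuadraticMap
    (ω.compl₁₂ (LinearMap.fst R V (V × V)) (LinearMap.fst R V V ∘ₗ LinearMap.snd R V (V × V)) +
      ω.compl₁₂ (LinearMap.id.coprod (LinearMap.fst R V V))
        (LinearMap.snd R V V ∘ₗ LinearMap.snd R V (V × V)))).restrict _

theorem range_fst_closedTriangles (L₁ L₂ L₃ : Submodule R V) :
    LinearMap.range (LinearMap.fst R V V ∘ₗ (closedTriangles L₁ L₂ L₃).subtype) =
      L₁ ⊓ (L₂ ⊔ L₃) := by
  ext x
  constructor
  · rintro ⟨⟨⟨x, y⟩, ⟨hx, hy⟩, hz⟩, rfl⟩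
    exact ⟨hx, Submodule.mem_sup.2 ⟨-y, L₂.neg_mem hy, x + y, hz, by simp⟩⟩
  · rintro ⟨hx, hyz⟩
    obtain ⟨y, hy, z, hz, rfl⟩ := Submodule.mem_sup.1 hyz
    exact ⟨⟨(y + z, -y), ⟨hx, L₂.neg_mem hy⟩, by simpa using hz⟩, rfl⟩

/-- Rotation of a triangle `(x, y, z)` to `(y, z, x)`. -/
def rotateTriangle (L₁ L₂ L₃ : Submodule R V) :
    closedTriangles L₁ L₂ L₃ →ₗ[R] closedTriangles L₂ L₃ L₁ :=
  ((LinearMap.snd R V V).prod (-(LinearMap.fst R V V + LinearMap.snd R V V))).restrict (by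
    rintro ⟨x, y⟩ ⟨⟨hx, hy⟩, hz⟩
    exact ⟨⟨hy, L₃.neg_mem hz⟩, by simpa using hx⟩)

theorem rotateTriangle_surjective (L₁ L₂ L₃ : Submodule R V) :
    Function.Surjective (rotateTriangle L₁ L₂ L₃) := by
  rintro ⟨⟨y, z⟩, ⟨hy, hz⟩, hx⟩
  exact ⟨⟨(-(y + z), y), ⟨L₁.neg_mem hx, hy⟩, by simpa using hz⟩,
    Subtype.ext (by simp [rotateTriangle])⟩

theorem triangleForm_comp_rotateTriangle {ω : LinearMap.BilinForm R V} (hω : ω.IsAlt)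
    (L₁ L₂ L₃ : Submodule R V) :
    (triangleForm ω L₂ L₃ L₁).comp (rotateTriangle L₁ L₂ L₃) = triangleForm ω L₁ L₂ L₃ := by
  ext ⟨⟨x, y⟩, -⟩
  change ω y (-(x + y)) = ω x y
  rw [map_neg, map_add, hω.self_eq_zero, add_zero, hω.neg_eq]

/-- Rotation of a quadrilateral `(x, y, z, w)` to `(y, z, w, x)`. -/
def rotateQuadrilateral (L₁ L₂ L₃ L₄ : Submodule R V) :
    closedQuadrilaterals L₁ L₂ L₃ L₄ →ₗ[R] closedQuadrilaterals L₂ L₃ L₄ L₁ :=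
  ((LinearMap.fst R V V ∘ₗ LinearMap.snd R V (V × V)).prod
    ((LinearMap.snd R V V ∘ₗ LinearMap.snd R V (V × V)).prod
      (-LinearMap.id.coprod (LinearMap.id.coprod LinearMap.id)))).restrict (by
    rintro ⟨x, y, z⟩ ⟨⟨hx, hy, hz⟩, hw⟩
    refine ⟨⟨hy, hz, L₄.neg_mem hw⟩, ?_⟩
    change y + (z + -(x + (y + z))) ∈ L₁
    rwa [show y + (z + -(x + (y + z))) = -x by abel, L₁.neg_mem_iff])

theorem rotateQuadrilateral_surjective (L₁ L₂ L₃ L₄ : Submodule R V) :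
    Function.Surjective (rotateQuadrilateral L₁ L₂ L₃ L₄) := by
  rintro ⟨⟨y, z, w⟩, ⟨hy, hz, hw⟩, hx⟩
  refine ⟨⟨(-(y + (z + w)), y, z), ⟨L₁.neg_mem hx, hy, hz⟩, ?_⟩, Subtype.ext ?_⟩
  · simpa using hw
  · simp [rotateQuadrilateral]

theorem quadrilateralForm_comp_rotateQuadrilateral {ω : LinearMap.BilinForm R V} (hω : ω.IsAlt)
    (L₁ L₂ L₃ L₄ : Submodule R V) :
    (quadrilateralForm ω L₂ L₃ L₄ L₁).comp (rotateQuadrilateral L₁ L₂ L₃ L₄) =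
      quadrilateralForm ω L₁ L₂ L₃ L₄ := by
  ext ⟨⟨x, y, z⟩, -⟩
  change ω y z + ω (y + z) (-(x + (y + z))) = ω x y + ω (x + y) z
  simp only [map_neg, map_add, LinearMap.add_apply, hω.self_eq_zero, ← hω.neg_eq x,
    ← hω.neg_eq y z]
  ring

/-- The quadrilateral obtained by gluing a triangle with sides in `L₁`, `L₂`, `L₃` to one with
sides in `L₁`, `L₃`, `L₄`, adding up their sides in `L₁` and in `L₃`. -/
def glueTriangles (L₁ L₂ L₃ L₄ : Submodule R V) :
    closedTriangles L₁ L₂ L₃ × closedTriangles L₁ L₃ L₄ →ₗ[R]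
      closedQuadrilaterals L₁ L₂ L₃ L₄ where
  toFun t := ⟨(t.1.1.1 + t.2.1.1, t.1.1.2, t.2.1.2 - (t.1.1.1 + t.1.1.2)),
    ⟨L₁.add_mem t.1.2.1.1 t.2.2.1.1, t.1.2.1.2, L₃.sub_mem t.2.2.1.2 t.1.2.2⟩, by
      change t.1.1.1 + t.2.1.1 + (t.1.1.2 + (t.2.1.2 - (t.1.1.1 + t.1.1.2))) ∈ L₄
      convert (show t.2.1.1 + t.2.1.2 ∈ L₄ from t.2.2.2) using 1
      abel⟩
  map_add' s t := by
    ext <;> simp <;> abel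
  map_smul' c t := by
    ext <;> simp [smul_sub]

theorem mem_range_glueTriangles (L₁ L₂ L₃ L₄ : Submodule R V)
    (q : closedQuadrilaterals L₁ L₂ L₃ L₄) :
    q ∈ LinearMap.range (glueTriangles L₁ L₂ L₃ L₄) ↔ q.1.2.1 ∈ L₁ ⊔ L₃ := by
  constructor
  · rintro ⟨⟨⟨⟨x, y⟩, ⟨hx, hy⟩, hz⟩, _⟩, rfl⟩
    exact Submodule.mem_sup.2 ⟨-x, L₁.neg_mem hx, x + y, hz, neg_add_cancel_left x y⟩
  · obtain ⟨⟨x, y, z⟩, ⟨hx, hy, hz⟩, hw⟩ := q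
    intro hy'
    obtain ⟨u, hu, v, hv, rfl⟩ := Submodule.mem_sup.1 hy'
    refine ⟨(⟨(-u, u + v), ⟨L₁.neg_mem hu, hy⟩, ?_⟩,
      ⟨(x + u, z + v), ⟨L₁.add_mem hx hu, L₃.add_mem hz hv⟩, ?_⟩), Subtype.ext ?_⟩
    · simpa using hv
    · change x + u + (z + v) ∈ L₄
      convert (show x + (u + v + z) ∈ L₄ from hw) using 1
      abel
    · simp [glueTriangles]

theorem quadrilateralForm_comp_glueTriangles {ω : LinearMap.BilinForm R V}
    {L₁ L₃ : Submodule R V} (h₁ : L₁ ≤ ω.orthogonal L₁) (h₃ : L₃ ≤ ω.orthogonal L₃)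
    (hω : ω.IsAlt) (L₂ L₄ : Submodule R V) :
    (quadrilateralForm ω L₁ L₂ L₃ L₄).comp (glueTriangles L₁ L₂ L₃ L₄) =
      (triangleForm ω L₁ L₂ L₃).prod (triangleForm ω L₁ L₃ L₄) := by
  ext ⟨⟨⟨x, y⟩, ⟨hx, hy⟩, hz⟩, ⟨⟨x', z'⟩, ⟨hx', hz'⟩, -⟩⟩
  change ω (x + x') y + ω (x + x' + y) (z' - (x + y)) = ω x y + ω x' z'
  have area_sides₁ : ω x' x = 0 := h₁ hx x' hx'
  have area_sides₃ : ω (x + y) z' = 0 := h₃ hz' (x + y) hz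
  have yx : -ω x y = ω y x := hω.neg_eq x y
  simp only [map_add, map_sub, LinearMap.add_apply, hω.self_eq_zero] at area_sides₃ ⊢
  linear_combination area_sides₃ - area_sides₁ + yx

/-- The degenerate quadrilaterals `(a, 0, -a, 0)` running along a common side `a ∈ L₁ ⊓ L₃` back
and forth. -/
def backAndForth (L₁ L₂ L₃ L₄ : Submodule R V) :
    Submodule R (closedQuadrilaterals L₁ L₂ L₃ L₄) :=
  ((L₁ ⊓ L₃).map (LinearMap.id.prod ((0 : V →ₗ[R] V).prod (-LinearMap.id)))).submoduleOf _

theorem quadrilateralForm_eq_zero_of_mem_backAndForth {ω : LinearMap.BilinForm R V}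
    (hω : ω.IsAlt) {L₁ L₂ L₃ L₄ : Submodule R V} {q : closedQuadrilaterals L₁ L₂ L₃ L₄}
    (hq : q ∈ backAndForth L₁ L₂ L₃ L₄) : quadrilateralForm ω L₁ L₂ L₃ L₄ q = 0 := by
  obtain ⟨a, -, ha⟩ := hq
  change ω q.1.1 q.1.2.1 + ω (q.1.1 + q.1.2.1) q.1.2.2 = 0
  change (a, 0, -a) = q.1 at ha
  simp [← ha, hω.self_eq_zero]

theorem polar_quadrilateralForm_backAndForth {ω : LinearMap.BilinForm R V} (hω : ω.IsAlt)
    {L₁ L₃ : Submodule R V} (h₁ : L₁ ≤ ω.orthogonal L₁) (h₃ : L₃ ≤ ω.orthogonal L₃)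
    (L₂ L₄ : Submodule R V) {a : V} (ha : a ∈ L₁ ⊓ L₃) {k q : closedQuadrilaterals L₁ L₂ L₃ L₄}
    (hk : (a, 0, -a) = k.1) :
    QuadraticMap.polar (quadrilateralForm ω L₁ L₂ L₃ L₄) k q = 2 * ω a q.1.2.1 := by
  obtain ⟨_, _⟩ := k
  obtain ⟨⟨x, y, z⟩, ⟨hx, hy, hz⟩, -⟩ := q
  subst hk
  change ω (a + x) (0 + y) + ω (a + x + (0 + y)) (-a + z) - (ω a 0 + ω (a + 0) (-a)) -
    (ω x y + ω (x + y) z) = 2 * ω a y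
  have xa : ω x a = 0 := h₁ ha.1 x hx
  have az : ω a z = 0 := h₃ hz a ha.2
  have ya : -ω a y = ω y a := hω.neg_eq a y
  simp only [map_add, map_neg, map_zero, zero_add, add_zero, LinearMap.add_apply,
    hω.self_eq_zero, xa, az, ← ya]
  ring

theorem orthogonal_backAndForth [NoZeroDivisors R] [NeZero (2 : R)]
    {ω : LinearMap.BilinForm R V} (hω : ω.IsAlt) {L₁ L₃ : Submodule R V}
    (h₁ : L₁ ≤ ω.orthogonal L₁) (h₃ : L₃ ≤ ω.orthogonal L₃)
    (h : ω.orthogonal (L₁ ⊓ L₃) = L₁ ⊔ L₃) (L₂ L₄ : Submodule R V) :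
    LinearMap.BilinForm.orthogonal (quadrilateralForm ω L₁ L₂ L₃ L₄).polarBilin
      (backAndForth L₁ L₂ L₃ L₄) = LinearMap.range (glueTriangles L₁ L₂ L₃ L₄) := by
  ext q
  rw [mem_range_glueTriangles, ← h]
  constructor
  · intro hq a ha
    have a_mem : ((a, 0, -a) : V × V × V) ∈ closedQuadrilaterals L₁ L₂ L₃ L₄ :=
      ⟨⟨ha.1, L₂.zero_mem, L₃.neg_mem ha.2⟩, by simp⟩
    have polar_eq_zero := hq ⟨(a, 0, -a), a_mem⟩ ⟨a, ha, rfl⟩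
    exact (mul_eq_zero.1 ((polar_quadrilateralForm_backAndForth hω h₁ h₃ L₂ L₄ ha rfl).symm.trans
      polar_eq_zero)).resolve_left two_ne_zero
  · rintro hq k ⟨a, ha, hk⟩
    refine (polar_quadrilateralForm_backAndForth hω h₁ h₃ L₂ L₄ ha hk).trans ?_
    rw [show ω a q.1.2.1 = 0 from hq a ha, mul_zero]

end Polygons

section PolygonSignatures

variable {𝕜 V : Type*} [Field 𝕜] [LinearOrder 𝕜] [AddCommGroup V] [Module 𝕜 V]
  [FiniteDimensional 𝕜 V] {ω : LinearMap.BilinForm 𝕜 V}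

theorem formSignature_triangleForm_rotate (hω : ω.IsAlt) (L₁ L₂ L₃ : Submodule 𝕜 V) :
    formSignature (triangleForm ω L₁ L₂ L₃) = formSignature (triangleForm ω L₂ L₃ L₁) := by
  rw [← triangleForm_comp_rotateTriangle hω,
    formSignature_comp_of_surjective _ (rotateTriangle_surjective L₁ L₂ L₃)]

theorem formSignature_quadrilateralForm_rotate (hω : ω.IsAlt) (L₁ L₂ L₃ L₄ : Submodule 𝕜 V) :
    formSignature (quadrilateralForm ω L₁ L₂ L₃ L₄) =
      formSignature (quadrilateralForm ω L₂ L₃ L₄ L₁) := by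
  rw [← quadrilateralForm_comp_rotateQuadrilateral hω,
    formSignature_comp_of_surjective _ (rotateQuadrilateral_surjective L₁ L₂ L₃ L₄)]

theorem formSignature_quadrilateralForm [IsStrictOrderedRing 𝕜] (hω : ω.IsAlt)
    {L₁ L₃ : Submodule 𝕜 V} (h₁ : L₁ ≤ ω.orthogonal L₁) (h₃ : L₃ ≤ ω.orthogonal L₃)
    (h : ω.orthogonal (L₁ ⊓ L₃) = L₁ ⊔ L₃) (L₂ L₄ : Submodule 𝕜 V) :
    formSignature (quadrilateralForm ω L₁ L₂ L₃ L₄) =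
      formSignature (triangleForm ω L₁ L₂ L₃) + formSignature (triangleForm ω L₁ L₃ L₄) := by
  rw [← formSignature_prod, ← quadrilateralForm_comp_glueTriangles h₁ h₃ hω L₂ L₄]
  exact (formSignature_comp_of_range_eq_orthogonal _
    (fun _ ↦ quadrilateralForm_eq_zero_of_mem_backAndForth hω) _
    (orthogonal_backAndForth hω h₁ h₃ h L₂ L₄).symm).symm

end PolygonSignatures

section Lagrangian

theorem orthogonal_orthogonal_of_orthogonal_top_le {K V : Type*} [Field K] [AddCommGroup V]
    [Module K V] [FiniteDimensional K V] {ω : LinearMap.BilinForm K V} (hω : ω.IsRefl)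
    {W : Submodule K V} (hW : ω.orthogonal ⊤ ≤ W) : ω.orthogonal (ω.orthogonal W) = W := by
  have finrank_orthogonal := LinearMap.BilinForm.finrank_add_finrank_orthogonal hω W
  have finrank_orthogonal_orthogonal :=
    LinearMap.BilinForm.finrank_add_finrank_orthogonal hω (ω.orthogonal W)
  have top_le : ω.orthogonal ⊤ ≤ ω.orthogonal W :=
    LinearMap.BilinForm.orthogonal_le le_top
  rw [inf_eq_right.2 hW] at finrank_orthogonal
  rw [inf_eq_right.2 top_le] at finrank_orthogonal_orthogonal
  refine (Submodule.eq_of_le_of_finrank_le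
    (LinearMap.BilinForm.le_orthogonal_orthogonal hω) ?_).symm
  omega

theorem orthogonal_sup {R M : Type*} [CommRing R] [AddCommGroup M] [Module R M]
    (ω : LinearMap.BilinForm R M) (W W' : Submodule R M) :
    ω.orthogonal (W ⊔ W') = ω.orthogonal W ⊓ ω.orthogonal W' := by
  refine le_antisymm (le_inf (LinearMap.BilinForm.orthogonal_le le_sup_left)
    (LinearMap.BilinForm.orthogonal_le le_sup_right)) ?_
  rintro x ⟨hx, hx'⟩ y hy
  obtain ⟨w, hw, w', hw', rfl⟩ := Submodule.mem_sup.1 hy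
  change ω (w + w') x = 0
  rw [map_add, LinearMap.add_apply, show ω w x = 0 from hx w hw,
    show ω w' x = 0 from hx' w' hw', add_zero]

variable {V : Type*} [AddCommGroup V] [Module ℝ V] {ω : LinearMap.BilinForm ℝ V}

theorem IsLagrangian.orthogonal_inf [FiniteDimensional ℝ V] (hω : ω.IsRefl)
    {L L' : Submodule ℝ V} (h : IsLagrangian ω L) (h' : IsLagrangian ω L') :
    ω.orthogonal (L ⊓ L') = L ⊔ L' := by
  have orthogonal_sup_eq : ω.orthogonal (L ⊔ L') = L ⊓ L' :=
    (orthogonal_sup ω L L').trans (congrArg₂ (· ⊓ ·) h h')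
  have top_le : ω.orthogonal ⊤ ≤ L ⊔ L' :=
    (LinearMap.BilinForm.orthogonal_le le_top).trans (h.le.trans le_sup_left)
  rw [← orthogonal_sup_eq, orthogonal_orthogonal_of_orthogonal_top_le hω top_le]

theorem wallPsi_self_eq {L₂ L₃ : Submodule ℝ V} (h₂ : L₂ ≤ ω.orthogonal L₂)
    (h₃ : L₃ ≤ ω.orthogonal L₃) {x y : V} (hy : y ∈ L₂) (hz : x + y ∈ L₃) :
    wallPsi ω L₂ L₃ x x = ω x y := by
  have decomposition : ∃ q : V × V, q.1 ∈ L₂ ∧ q.2 ∈ L₃ ∧ x + q.1 + q.2 = 0 :=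
    ⟨(y, -(x + y)), hy, L₃.neg_mem hz, add_neg_cancel _⟩
  rw [wallPsi, dif_pos decomposition]
  obtain ⟨hu, hv, hsum⟩ := decomposition.choose_spec
  set u := decomposition.choose.1
  have xu_mem : x + u ∈ L₃ := by
    rw [eq_neg_of_add_eq_zero_left hsum]
    exact L₃.neg_mem hv
  have diff_mem : u - y ∈ L₃ := by
    simpa only [add_sub_add_left_eq_sub] using L₃.sub_mem xu_mem hz
  have diff_orthogonal₂ : ω y (u - y) = 0 := h₂ (L₂.sub_mem hu hy) y hy
  have diff_orthogonal₃ : ω (x + y) (u - y) = 0 := h₃ diff_mem (x + y) hz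
  rw [map_add, LinearMap.add_apply, diff_orthogonal₂, add_zero, map_sub] at diff_orthogonal₃
  exact sub_eq_zero.1 diff_orthogonal₃

theorem wallSignature_eq_formSignature_triangleForm [FiniteDimensional ℝ V]
    (L₁ : Submodule ℝ V) {L₂ L₃ : Submodule ℝ V} (h₂ : L₂ ≤ ω.orthogonal L₂)
    (h₃ : L₃ ≤ ω.orthogonal L₃) :
    wallSignature ω L₁ L₂ L₃ = formSignature (triangleForm ω L₁ L₂ L₃) := by
  have wallPsi_eq_area (t : closedTriangles L₁ L₂ L₃) :
      wallPsi ω L₂ L₃ t.1.1 t.1.1 = triangleForm ω L₁ L₂ L₃ t :=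
    wallPsi_self_eq h₂ h₃ t.2.1.2 t.2.2
  have wallPosIndex_eq : wallPosIndex ω L₁ L₂ L₃ = sigPos (triangleForm ω L₁ L₂ L₃) := by
    rw [wallPosIndex, ← range_fst_closedTriangles]
    exact sSup_finrank_pos_eq_sigPos _ _ (fun x ↦ wallPsi ω L₂ L₃ x x) wallPsi_eq_area
  have wallNegIndex_eq : wallNegIndex ω L₁ L₂ L₃ = sigNeg (triangleForm ω L₁ L₂ L₃) := by
    simp only [wallNegIndex, ← range_fst_closedTriangles, ← neg_pos (a := wallPsi ω L₂ L₃ _ _)]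
    exact sSup_finrank_pos_eq_sigPos (-triangleForm ω L₁ L₂ L₃) _
      (fun x ↦ -wallPsi ω L₂ L₃ x x) fun t ↦ congrArg Neg.neg (wallPsi_eq_area t)
  rw [wallSignature, formSignature, wallPosIndex_eq, wallNegIndex_eq]

end Lagrangian

theorem wall_signature_cocycle_general
    {V : Type*} [AddCommGroup V] [Module ℝ V] [FiniteDimensional ℝ V]
    (ω : LinearMap.BilinForm ℝ V) (halt : ω.IsAlt) (L₁ L₂ L₃ L₄ : Submodule ℝ V)
    (h₁ : IsLagrangian ω L₁) (h₂ : IsLagrangian ω L₂)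
    (h₃ : IsLagrangian ω L₃) (h₄ : IsLagrangian ω L₄) :
    wallSignature ω L₁ L₂ L₃ + wallSignature ω L₁ L₃ L₄ =
      wallSignature ω L₁ L₂ L₄ + wallSignature ω L₂ L₃ L₄ := by
  have cut₁₃ := formSignature_quadrilateralForm halt h₁.ge h₃.ge
    (h₁.orthogonal_inf halt.isRefl h₃) L₂ L₄
  have cut₂₄ := formSignature_quadrilateralForm halt h₂.ge h₄.ge
    (h₂.orthogonal_inf halt.isRefl h₄) L₃ L₁
  rw [wallSignature_eq_formSignature_triangleForm L₁ h₂.ge h₃.ge,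
    wallSignature_eq_formSignature_triangleForm L₁ h₃.ge h₄.ge,
    wallSignature_eq_formSignature_triangleForm L₁ h₂.ge h₄.ge,
    wallSignature_eq_formSignature_triangleForm L₂ h₃.ge h₄.ge,
    ← cut₁₃, formSignature_quadrilateralForm_rotate halt, cut₂₄,
    formSignature_triangleForm_rotate halt L₁ L₂ L₄, add_comm]

/-- **Cocycle identity for Wall signatures (Maslov triple index).**
For Lagrangian subspaces `L₁, L₂, L₃, L₄` of a symplectic vector space `(V, ω)`,
`σ(V; L₁, L₂, L₃) + σ(V; L₁, L₃, L₄) = σ(V; L₁, L₂, L₄) + σ(V; L₂, L₃, L₄)`. -/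
theorem wall_signature_cocycle
    {V : Type*} [AddCommGroup V] [Module ℝ V] [FiniteDimensional ℝ V]
    (ω : LinearMap.BilinForm ℝ V) (halt : ω.IsAlt) (hnd : ω.Nondegenerate)
    (L₁ L₂ L₃ L₄ : Submodule ℝ V)
    (h₁ : IsLagrangian ω L₁) (h₂ : IsLagrangian ω L₂)
    (h₃ : IsLagrangian ω L₃) (h₄ : IsLagrangian ω L₄) :
    wallSignature ω L₁ L₂ L₃ + wallSignature ω L₁ L₃ L₄ =
      wallSignature ω L₁ L₂ L₄ + wallSignature ω L₂ L₃ L₄ :=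
  wall_signature_cocycle_general ω halt L₁ L₂ L₃ L₄ h₁ h₂ h₃ h₄
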